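/- arXiv:2306.17382 — 2 statements merged into one kernel-verified Lean document; each statement's English description precedes it below -/
import Mathlib

section
/- Let L be a field, σ a field automorphism of L, n ≥ 1, and V a 2n-dimensional L-vector space equipped with an alternating bilinear form ⟨·,·⟩. Let c ∈ L \ {0} and let F : V → V be an additive bijection which is σ-semilinear (F(a·v) = σ(a)·F(v) for all a ∈ L, v ∈ V) and satisfies ⟨F(x),F(y)⟩ = c·σ(⟨x,y⟩) for all x,y ∈ V. If v ∈ V satisfies ⟨v,F^i(v)⟩ = 0 for all 1 ≤ i ≤ n−1 and ⟨v,F^n(v)⟩ ≠ 0, then the 2n vectors v, F(v), F²(v), …, F^{2n−1}(v) form an L-basis of V. -/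
noncomputable section

/-!
Write `eᵢ = Fⁱ v`. Since `F` preserves orthogonality, `eᵢ` and `eⱼ` are orthogonal for
`|i - j| < n` and not orthogonal for `|i - j| = n`. On `e₀, …, e₂ₙ₋₁` the functional `B eₖ₊ₙ`,
`k < n`, therefore vanishes beyond `eₖ` and not at `eₖ`, while `B eₖ` vanishes before `eₖ₊ₙ` and not
at `eₖ₊ₙ`. So the coefficients of a linear relation vanish one after the other, from both ends of
the range inwards, and `2n` independent vectors span.
-/

section TriangularPairing

variable {R M ι α : Type*} [Ring R] [NoZeroDivisors R] [AddCommGroup M] [Module R M]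
  [Preorder α] [WellFoundedLT α]

theorem linearIndependent_of_triangular_pairing (rank : ι → α) {e : ι → M} {φ : ι → M →ₗ[R] R}
    (hdiag : ∀ i, φ i (e i) ≠ 0) (htri : ∀ i j, j ≠ i → ¬ rank j < rank i → φ i (e j) = 0) :
    LinearIndependent R e := by
  rw [linearIndependent_iff']
  intro s a hrel i
  induction i using (InvImage.wf rank wellFounded_lt).induction with
  | _ i ih =>
    intro hi
    have hpair : ∑ j ∈ s, a j * φ i (e j) = 0 := by
      simpa only [map_sum, map_smul, smul_eq_mul, map_zero] using congrArg (φ i) hrel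
    have hsingle : ∑ j ∈ s, a j * φ i (e j) = a i * φ i (e i) := by
      refine Finset.sum_eq_single_of_mem i hi fun j hj hji => ?_
      by_cases hlt : rank j < rank i
      · rw [ih j hlt hj, zero_mul]
      · rw [htri i j hji hlt, mul_zero]
    exact (mul_eq_zero.mp (hsingle.symm.trans hpair)).resolve_right (hdiag i)

end TriangularPairing

theorem rel_iterate_iff {α : Type*} {r : α → α → Prop} {F : α → α}
    (hF : ∀ x y, r (F x) (F y) ↔ r x y) (i : ℕ) (x y : α) : r (F^[i] x) (F^[i] y) ↔ r x y := by
  induction i with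
  | zero => rfl
  | succ i ih => rw [Function.iterate_succ_apply', Function.iterate_succ_apply', hF, ih]

section ReflexiveForm

variable {R M : Type*} [CommRing R] [NoZeroDivisors R] [AddCommGroup M] [Module R M]
  {τ : R →+* R} {B : M →ₛₗ[τ] M →ₗ[R] R} {n : ℕ}

theorem linearIndependent_of_orthogonal_band (hB : B.IsRefl) {e : ℕ → M}
    (horth : ∀ i d, d < n → B (e i) (e (i + d)) = 0) (hne : ∀ i, B (e i) (e (i + n)) ≠ 0) :
    LinearIndependent R fun i : Fin (2 * n) => e i := by
  have horth_symm (i j : ℕ) (hij : i < j + n) (hji : j < i + n) : B (e i) (e j) = 0 := by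
    rcases le_total i j with h | h
    · obtain ⟨d, rfl⟩ := Nat.exists_eq_add_of_le h
      exact horth i d (by lia)
    · obtain ⟨d, rfl⟩ := Nat.exists_eq_add_of_le h
      exact hB _ _ (horth j d (by lia))
  let partner (k : ℕ) : ℕ := if k < n then k + n else k - n
  let distToEnd (k : Fin (2 * n)) : ℕ := min (k : ℕ) (2 * n - 1 - k)
  refine linearIndependent_of_triangular_pairing distToEnd (φ := fun k => B (e (partner k))) ?_ ?_
  · intro k
    by_cases hk : (k : ℕ) < n
    · simpa only [partner, if_pos hk] using fun h => hne k (hB _ _ h)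
    · simpa only [partner, if_neg hk, Nat.sub_add_cancel (not_lt.mp hk)] using hne (k - n)
  · intro k j hne_jk hdist
    by_cases hk : (k : ℕ) < n
    · have hlt : (k : ℕ) < j := by lia
      simpa only [partner, if_pos hk] using horth_symm (k + n) j (by lia) (by lia)
    · have hlt : (j : ℕ) < k := by lia
      simpa only [partner, if_neg hk] using horth_symm (k - n) j (by lia) (by lia)

theorem linearIndependent_iterate (hB : B.IsRefl) {F : M → M}
    (hF : ∀ x y, B (F x) (F y) = 0 ↔ B x y = 0) {v : M}
    (horth : ∀ i < n, B v (F^[i] v) = 0) (hne : B v (F^[n] v) ≠ 0) :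
    LinearIndependent R fun i : Fin (2 * n) => F^[i] v := by
  have hshift (i d : ℕ) : B (F^[i] v) (F^[i + d] v) = 0 ↔ B v (F^[d] v) = 0 := by
    rw [Function.iterate_add_apply]
    exact rel_iterate_iff (r := fun x y => B x y = 0) hF i v (F^[d] v)
  exact linearIndependent_of_orthogonal_band (e := fun i => F^[i] v) hB
    (fun i d hd => (hshift i d).mpr (horth d hd)) fun i => (hshift i n).not.mpr hne

end ReflexiveForm

theorem semilinear_iterates_form_basis_general {L V : Type*} [Field L] [AddCommGroup V]
    [Module L V] {τ : L →+* L} {B : V →ₛₗ[τ] V →ₗ[L] L} (hB : B.IsRefl) {n : ℕ} (hn : 1 ≤ n)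
    (hdim : Module.finrank L V = 2 * n) {F : V → V}
    (hF : ∀ x y, B (F x) (F y) = 0 ↔ B x y = 0) {v : V}
    (horth : ∀ i < n, B v (F^[i] v) = 0) (hne : B v (F^[n] v) ≠ 0) :
    LinearIndependent L (fun i : Fin (2 * n) => F^[(i : ℕ)] v) ∧
      Submodule.span L (Set.range fun i : Fin (2 * n) => F^[(i : ℕ)] v) = ⊤ := by
  have hli := linearIndependent_iterate hB hF horth hne
  have : FiniteDimensional L V := FiniteDimensional.of_finrank_pos (by lia)
  exact ⟨hli, hli.span_eq_top_of_card_eq_finrank' (by rw [Fintype.card_fin, hdim])⟩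

/-- **Basis lemma.** Let `L` be a field, `σ` a field automorphism of `L`, `n ≥ 1`, and `V` a
`2n`-dimensional `L`-vector space equipped with an alternating bilinear form `B`. Let `c ∈ L∖{0}`
and let `F : V → V` be an additive bijection which is `σ`-semilinear and satisfies
`B (F x) (F y) = c · σ (B x y)` for all `x, y`. If `v` satisfies `B v (F^i v) = 0` for
`1 ≤ i ≤ n − 1` and `B v (F^n v) ≠ 0`, then `v, F(v), …, F^{2n−1}(v)` form an `L`-basis of `V`. -/
theorem semilinear_iterates_form_basis
    (L : Type*) [Field L] (σ : L ≃+* L)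
    (n : ℕ) (hn : 1 ≤ n)
    (V : Type*) [AddCommGroup V] [Module L V]
    (hdim : Module.finrank L V = 2 * n)
    (B : V →ₗ[L] V →ₗ[L] L) (halt : ∀ x : V, B x x = 0)
    (c : L) (hc : c ≠ 0)
    (F : V → V) (hFbij : Function.Bijective F)
    (hFadd : ∀ x y : V, F (x + y) = F x + F y)
    (hFsemi : ∀ (a : L) (x : V), F (a • x) = σ a • F x)
    (hFB : ∀ x y : V, B (F x) (F y) = c * σ (B x y))
    (v : V)
    (hv1 : ∀ i : ℕ, 1 ≤ i → i ≤ n - 1 → B v (F^[i] v) = 0)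
    (hv2 : B v (F^[n] v) ≠ 0) :
    LinearIndependent L (fun i : Fin (2 * n) => F^[(i : ℕ)] v) ∧
      Submodule.span L (Set.range fun i : Fin (2 * n) => F^[(i : ℕ)] v) = ⊤ := by
  refine semilinear_iterates_form_basis_general (LinearMap.IsAlt.isRefl halt) hn hdim
    (fun x y => by rw [hFB, mul_eq_zero_iff_left hc, map_eq_zero]) (fun i hi => ?_) hv2
  exact i.eq_zero_or_pos.elim (fun h => h ▸ halt v) fun h => hv1 i h (Nat.le_sub_one_of_lt hi)
end
end

section
/- Let 𝔽 be an algebraic closure of 𝔽_q, where q is a power of a prime p; for t ∈ 𝔽 write t^{1/q} for the unique q-th root of t in 𝔽. Let x, w ∈ 𝔽 satisfy x·w^{q²} − w·x^{q²} ≠ 0. Then the map (y,z) ↦ x^{1/q}·z − w^{1/q}·y is a bijection from the set {(y,z) ∈ 𝔽² : x·z^q − y·w^q + z·x^q − w·y^q = 0} onto 𝔽. -/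
noncomputable section
open scoped Classical

namespace ToyGSp4

/-- The algebraic closure `𝔽` of `𝔽_p` (hence of `𝔽_q` for any `q = p ^ s`). -/
abbrev FF (p : ℕ) [Fact p.Prime] : Type := AlgebraicClosure (ZMod p)

variable (p : ℕ) [Fact p.Prime] (s : ℕ)

/-- `q = p ^ s`. -/
def Q : ℕ := p ^ s

/-- `t^{1/q}`, the unique `q`-th root of `t` in `𝔽` (which exists and is unique since `𝔽` is
perfect of characteristic `p`). -/
def rootQ (t : FF p) : FF p := Function.invFun (fun a : FF p => a ^ Q p s) t

/-!
Write `x = a ^ q` and `w = b ^ q`. In the coordinates `t = a z - b y` and `u = x ^ q z - w ^ q y`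
the hypersurface has equation `t ^ q + u = 0`, so it is a graph over the `t`-line. The determinant
of this linear change of coordinates has `q`-th power `x w ^ (q ^ 2) - w x ^ (q ^ 2)` up to sign.
-/

theorem rootQ_pow (t : FF p) : rootQ p s t ^ Q p s = t :=
  have q_pos : 0 < Q p s := pow_pos (Fact.out : p.Prime).pos s
  Function.invFun_eq (IsAlgClosed.exists_pow_nat_eq t q_pos)

theorem bijOn_setOf_eq_comp_univ {α β γ : Type*} {f : α → β} {g : α → γ}
    (hfg : Function.Bijective fun v ↦ (f v, g v)) (h : β → γ) :
    Set.BijOn f {v | g v = h (f v)} Set.univ := by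
  refine ⟨Set.mapsTo_univ _ _, fun v hv v' hv' hf ↦ hfg.injective (Prod.ext hf ?_), fun t _ ↦ ?_⟩
  · calc g v = h (f v) := hv
      _ = h (f v') := congrArg h hf
      _ = g v' := hv'.symm
  · obtain ⟨v, hv⟩ := hfg.surjective (t, h t)
    obtain ⟨rfl, hg⟩ := Prod.mk.inj hv
    exact ⟨v, hg, rfl⟩

section CommRing

variable {R : Type*} [CommRing R]

theorem bijective_linear_prod_of_isUnit_det {a b c d : R} (hdet : IsUnit (a * d - b * c)) :
    Function.Bijective fun v : R × R ↦ (a * v.1 + b * v.2, c * v.1 + d * v.2) := by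
  obtain ⟨e, he⟩ := hdet.exists_left_inv
  refine Function.bijective_iff_has_inverse.mpr
    ⟨fun v ↦ (e * (d * v.1 - b * v.2), e * (a * v.2 - c * v.1)), fun v ↦ ?_, fun v ↦ ?_⟩
  · ext
    · linear_combination v.1 * he
    · linear_combination v.2 * he
  · ext
    · linear_combination v.1 * he
    · linear_combination v.2 * he

variable {ℓ n : ℕ} [ExpChar R ℓ] {x w a b : R}

theorem mul_sub_mul_pow_expChar_pow (ha : a ^ ℓ ^ n = x) (hb : b ^ ℓ ^ n = w) (y z : R) :
    (a * z - b * y) ^ ℓ ^ n = x * z ^ ℓ ^ n - w * y ^ ℓ ^ n := by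
  rw [sub_pow_expChar_pow, mul_pow, mul_pow, ha, hb]

theorem isUnit_mul_pow_sub_mul_pow (ha : a ^ ℓ ^ n = x) (hb : b ^ ℓ ^ n = w)
    (hxw : IsUnit (x * w ^ (ℓ ^ n) ^ 2 - w * x ^ (ℓ ^ n) ^ 2)) :
    IsUnit (a * w ^ ℓ ^ n - b * x ^ ℓ ^ n) := by
  have det_pow : (a * w ^ ℓ ^ n - b * x ^ ℓ ^ n) ^ ℓ ^ n =
      x * w ^ (ℓ ^ n) ^ 2 - w * x ^ (ℓ ^ n) ^ 2 := by
    rw [mul_sub_mul_pow_expChar_pow ha hb, ← pow_mul, ← pow_mul, ← sq]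
  have q_ne_zero : ℓ ^ n ≠ 0 := (expChar_pow_pos R ℓ n).ne'
  rwa [← isUnit_pow_iff q_ne_zero, det_pow]

theorem toy_hypersurface_bijection_general (ha : a ^ ℓ ^ n = x) (hb : b ^ ℓ ^ n = w)
    (hxw : IsUnit (x * w ^ (ℓ ^ n) ^ 2 - w * x ^ (ℓ ^ n) ^ 2)) :
    Set.BijOn (fun yz : R × R ↦ a * yz.2 - b * yz.1)
      {yz : R × R |
        x * yz.2 ^ ℓ ^ n - yz.1 * w ^ ℓ ^ n + yz.2 * x ^ ℓ ^ n - w * yz.1 ^ ℓ ^ n = 0}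
      Set.univ := by
  have coordinates_bijective : Function.Bijective fun yz : R × R ↦
      (a * yz.2 - b * yz.1, x ^ ℓ ^ n * yz.2 - w ^ ℓ ^ n * yz.1) := by
    have det_isUnit : IsUnit (-b * x ^ ℓ ^ n - a * -w ^ ℓ ^ n) := by
      convert isUnit_mul_pow_sub_mul_pow ha hb hxw using 1
      ring
    simpa only [neg_mul, neg_add_eq_sub] using bijective_linear_prod_of_isUnit_det det_isUnit
  have equation_in_coordinates (y z : R) :
      x * z ^ ℓ ^ n - y * w ^ ℓ ^ n + z * x ^ ℓ ^ n - w * y ^ ℓ ^ n =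
        x ^ ℓ ^ n * z - w ^ ℓ ^ n * y + (a * z - b * y) ^ ℓ ^ n := by
    rw [mul_sub_mul_pow_expChar_pow ha hb]
    ring
  simpa only [equation_in_coordinates, ← eq_neg_iff_add_eq_zero] using
    bijOn_setOf_eq_comp_univ coordinates_bijective (fun t ↦ -t ^ ℓ ^ n)

end CommRing

/-- **Key computation of the introduction (case `G = GSp₄`).** If `x·w^{q²} − w·x^{q²} ≠ 0`,
then `(y, z) ↦ x^{1/q}·z − w^{1/q}·y` is a bijection from
`{(y, z) : x·z^q − y·w^q + z·x^q − w·y^q = 0}` onto `𝔽`. -/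
theorem toy_hypersurface_bijection
    (hs : 0 < s) (x w : FF p)
    (hxw : x * w ^ (Q p s ^ 2) - w * x ^ (Q p s ^ 2) ≠ 0) :
    Set.BijOn (fun yz : FF p × FF p => rootQ p s x * yz.2 - rootQ p s w * yz.1)
      {yz : FF p × FF p |
        x * yz.2 ^ Q p s - yz.1 * w ^ Q p s + yz.2 * x ^ Q p s - w * yz.1 ^ Q p s = 0}
      Set.univ :=
  toy_hypersurface_bijection_general (rootQ_pow p s x) (rootQ_pow p s w) hxw.isUnit

end ToyGSp4
end
end
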